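/- arXiv:1102.5255 — 6 statements merged into one kernel-verified Lean document; each statement's English description precedes it below -/
import Mathlib

section
/- Let p ≥ 1, let a be a p×p real matrix with det a ≠ 0, let b₁, b₂ ∈ ℝᵖ be two row vectors, let v ∈ ℝᵖ be a column vector, and let w₁, w₂ ∈ ℝ. For t ∈ {1,2} let m_t denote the determinant of the (p+1)×(p+1) matrix obtained from a by appending the row b_t at the bottom and the column v on the right, with corner entry w_t. For t ∈ {1,2} and s ∈ {1,…,p}, let a^{ts} denote the p×p matrix obtained from a by replacing its s-th row with b_t, and let m_j^{ts} denote the determinant of the (p+1)×(p+1) matrix obtained from the bordered matrix defining m_j by replacing its s-th row (which is the s-th row of a extended by the s-th entry of v) with the row (b_t, w_t). Then for all j, t ∈ {1,2} and s ∈ {1,…,p}: (det a)·m_j^{ts} = (det a^{ts})·m_j − (det a^{js})·m_t. -/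
/-!
Let `M` be the bordered matrix whose last row is the unit vector at the corner, so `det M = det a`.
By Cramer's rule `det M • y` is the combination of the rows of `M` whose coefficients are the
determinants of `M` with one row replaced by `y`. Substitute this for row `s` of `M` with last row
replaced by `x`: every row of `M` except row `s` and the last one then occurs twice, so two terms
survive and form a three-term Plücker relation.
-/

open Matrix

section Plucker

variable {n R : Type*} [Fintype n] [DecidableEq n] [CommRing R]

theorem sum_det_updateRow_smul_row (M : Matrix n n R) (y : n → R) :
    ∑ k, (M.updateRow k y).det • M k = M.det • y := by
  simpa only [mulVec_transpose, vecMul_eq_sum, cramer_transpose_apply, det_transpose]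
    using mulVec_cramer Mᵀ y

theorem det_updateRow_updateRow_swap (M : Matrix n n R) {i j : n} (hij : i ≠ j) (x y : n → R) :
    ((M.updateRow i x).updateRow j y).det = -((M.updateRow i y).updateRow j x).det := by
  have hswap : (M.updateRow i x).updateRow j y =
      ((M.updateRow i y).updateRow j x).submatrix (Equiv.swap i j) id := by
    ext k l
    obtain rfl | hkj := eq_or_ne k j
    · simp [hij]
    obtain rfl | hki := eq_or_ne k i
    · simp [hij]
    · simp [updateRow_ne, hkj, hki, Equiv.swap_apply_of_ne_of_ne hki hkj]
  rw [hswap, det_permute, Equiv.Perm.sign_swap hij, Units.val_neg, Units.val_one, Int.cast_neg,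
    Int.cast_one, neg_one_mul]

theorem det_mul_det_updateRow_updateRow (M : Matrix n n R) {i j : n} (hij : i ≠ j)
    (x y : n → R) :
    M.det * ((M.updateRow i y).updateRow j x).det =
      (M.updateRow i y).det * (M.updateRow j x).det -
        (M.updateRow i x).det * (M.updateRow j y).det := by
  have hrepeat : ∀ k, k ≠ i ∧ k ≠ j → ((M.updateRow j x).updateRow i (M k)).det = 0 := by
    rintro k ⟨hki, hkj⟩
    simpa only [updateRow_ne hkj] using det_updateRow_eq_zero (M := M.updateRow j x) hki
  have hrow_i : ((M.updateRow j x).updateRow i (M i)).det = (M.updateRow j x).det := by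
    rw [← updateRow_comm _ hij, updateRow_eq_self]
  have hrow_j : ((M.updateRow j x).updateRow i (M j)).det = -(M.updateRow i x).det := by
    rw [det_updateRow_updateRow_swap _ hij.symm, updateRow_eq_self]
  calc M.det * ((M.updateRow i y).updateRow j x).det
      = cramer (M.updateRow j x)ᵀ (M.det • y) i := by
        rw [map_smul, Pi.smul_apply, cramer_transpose_apply, updateRow_comm _ hij, smul_eq_mul]
    _ = ∑ k, (M.updateRow k y).det * ((M.updateRow j x).updateRow i (M k)).det := by
        rw [← sum_det_updateRow_smul_row]
        simp only [map_sum, map_smul, Finset.sum_apply, Pi.smul_apply, smul_eq_mul]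
        simp only [cramer_transpose_apply]
    _ = (M.updateRow i y).det * ((M.updateRow j x).updateRow i (M i)).det +
          (M.updateRow j y).det * ((M.updateRow j x).updateRow i (M j)).det :=
        Fintype.sum_eq_add i j hij fun k hk => by rw [hrepeat k hk, mul_zero]
    _ = (M.updateRow i y).det * (M.updateRow j x).det -
          (M.updateRow i x).det * (M.updateRow j y).det := by
        rw [hrow_i, hrow_j]
        ring

end Plucker

/-- The embordering of `a` by the column `v`, the row `r` and the corner entry `c`, with the new
row and column in the last position, as `Fin.snoc` places them. -/
def bordered {R : Type*} {p : ℕ} (a : Matrix (Fin p) (Fin p) R) (v r : Fin p → R) (c : R) :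
    Matrix (Fin (p + 1)) (Fin (p + 1)) R :=
  of (Fin.snoc (fun i => Fin.snoc (a i) (v i)) (Fin.snoc r c))

section Bordered

variable {R : Type*} {p : ℕ}

theorem bordered_updateRow_last (a : Matrix (Fin p) (Fin p) R) (v r r' : Fin p → R) (c c' : R) :
    (bordered a v r c).updateRow (Fin.last p) (Fin.snoc r' c') = bordered a v r' c' := by
  ext1 i
  induction i using Fin.lastCases <;> simp [bordered, updateRow_ne]

theorem bordered_updateRow_castSucc (a : Matrix (Fin p) (Fin p) R) (v r r' : Fin p → R)
    (c c' : R) (s : Fin p) :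
    (bordered a v r c).updateRow s.castSucc (Fin.snoc r' c') =
      bordered (a.updateRow s r') (Function.update v s c') r c := by
  ext i k
  cases i using Fin.lastCases with
  | last => simp [bordered, updateRow_ne (Fin.castSucc_lt_last s).ne']
  | cast i =>
    obtain rfl | hi := eq_or_ne i s
    · cases k using Fin.lastCases <;> simp [bordered]
    · cases k using Fin.lastCases <;> simp [bordered, hi]

variable [CommRing R]

theorem det_bordered_zero_one (a : Matrix (Fin p) (Fin p) R) (v : Fin p → R) :
    (bordered a v 0 1).det = a.det := by
  have hlast_row : bordered a v 0 1 (Fin.last p) = Pi.single (Fin.last p) 1 := by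
    ext k
    cases k using Fin.lastCases <;> simp [bordered]
  have hblock : (bordered a v 0 1).submatrix Fin.castSucc Fin.castSucc = a := by
    ext i k
    simp [bordered]
  calc (bordered a v 0 1).det
      = adjugate (bordered a v 0 1) (Fin.last p) (Fin.last p) := by
        rw [adjugate_apply, ← hlast_row, updateRow_eq_self]
    _ = ((bordered a v 0 1).submatrix Fin.castSucc Fin.castSucc).det := by
        rw [adjugate_fin_succ_eq_det_submatrix, Even.neg_one_pow ⟨_, rfl⟩, one_mul,
          Fin.succAbove_last]
    _ = a.det := by rw [hblock]

theorem embordering_minor_identity_general (a : Matrix (Fin p) (Fin p) R) (v r r' : Fin p → R)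
    (c c' : R) (s : Fin p) :
    a.det * ((bordered a v r c).updateRow s.castSucc (Fin.snoc r' c')).det =
      (a.updateRow s r').det * (bordered a v r c).det -
        (a.updateRow s r).det * (bordered a v r' c').det := by
  simpa only [bordered_updateRow_last, bordered_updateRow_castSucc, det_bordered_zero_one] using
    det_mul_det_updateRow_updateRow (bordered a v 0 1) (Fin.castSucc_lt_last s).ne
      (Fin.snoc r c) (Fin.snoc r' c')

end Bordered

/-- Lemma 1 of the paper: the determinant identity
`(det a) · m_j^{ts} = (det a^{ts}) · m_j − (det a^{js}) · m_t`
for minors embordering a nonsingular `p × p` block `a` with one of two rows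
`b₁, b₂`, a column `v` and corner entries `w₁, w₂`. -/
theorem embordering_minor_identity (p : ℕ) (hp : 1 ≤ p)
    (a : Matrix (Fin p) (Fin p) ℝ) (ha : a.det ≠ 0)
    (b : Fin 2 → Fin p → ℝ) (v : Fin p → ℝ) (w : Fin 2 → ℝ)
    (border : Fin 2 → Matrix (Fin (p + 1)) (Fin (p + 1)) ℝ)
    (hborder : ∀ t, border t =
      Matrix.of (Fin.snoc (fun i : Fin p => Fin.snoc (a i) (v i)) (Fin.snoc (b t) (w t)))) :
    ∀ (j t : Fin 2) (s : Fin p),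
      a.det * ((border j).updateRow s.castSucc (Fin.snoc (b t) (w t))).det
        = (a.updateRow s (b t)).det * (border j).det
          - (a.updateRow s (b j)).det * (border t).det := by
  intro j t s
  rw [hborder j, hborder t]
  exact embordering_minor_identity_general a v (b j) (b t) (w j) (w t) s
end

section
/- Sylvester's determinant identity: let p, q ≥ 1 and let A be a (p+q)×(p+q) real matrix with top-left p×p block a. For k, l ∈ {1,…,q}, let m_{k,l} be the determinant of the (p+1)×(p+1) matrix obtained from a by appending at the bottom the row (A_{p+k,1},…,A_{p+k,p}), on the right the column (A_{1,p+l},…,A_{p,p+l})ᵗ, and in the corner the entry A_{p+k,p+l}. Let M be the q×q matrix with entries M_{k,l} = m_{k,l}. Then det M = (det a)^{q−1} · det A. -/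
open Matrix

/-!
Write `A = [a, B; C, D]`. Multiplying `A` on the left by `[1, 0; -C adj(a), det(a) 1]` gives the
block triangular matrix `[a, B; 0, S]` with `S = det(a) D - C adj(a) B`, so that
`det(a)^q det(A) = det(a) det(S)`. The factor `det(a)` may be cancelled because it becomes a monic
polynomial, hence a regular element, once `a` is replaced by `X + a`. Each embordering of `a` is
itself a block matrix with `q = 1`, so the result applied to it identifies `m_{k,l}` with `S_{k,l}`.
-/

section ScaledSchurComplement

variable {m n k l R S : Type*} [Fintype m] [DecidableEq m] [Fintype n] [DecidableEq n]
  [CommRing R] [CommRing S]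

/-- The Schur complement `D - C a⁻¹ B` of `a` in `[a, B; C, D]`, scaled by `det a`. Using the
adjugate of `a` makes it meaningful also when `a` is singular. -/
def scaledSchurComplement (a : Matrix m m R) (B : Matrix m l R) (C : Matrix k m R)
    (D : Matrix k l R) : Matrix k l R :=
  a.det • D - C * a.adjugate * B

lemma scaledSchurComplement_map (f : R →+* S) (a : Matrix m m R) (B : Matrix m l R)
    (C : Matrix k m R) (D : Matrix k l R) :
    (scaledSchurComplement a B C D).map f =
      scaledSchurComplement (a.map f) (B.map f) (C.map f) (D.map f) := by
  have map_det : f a.det = (a.map f).det := f.map_det a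
  have map_adjugate : a.adjugate.map f = (a.map f).adjugate := f.map_adjugate a
  rw [scaledSchurComplement, Matrix.map_sub f (map_sub f), Matrix.map_smulₛₗ f f a.det (by simp),
    Matrix.map_mul, Matrix.map_mul, map_det, map_adjugate, scaledSchurComplement]

lemma det_mul_det_scaledSchurComplement (a : Matrix m m R) (B : Matrix m n R)
    (C : Matrix n m R) (D : Matrix n n R) :
    a.det * (scaledSchurComplement a B C D).det =
      a.det ^ Fintype.card n * (fromBlocks a B C D).det := by
  have elimination : fromBlocks 1 0 (-(C * a.adjugate)) (a.det • 1) * fromBlocks a B C D =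
      fromBlocks a B 0 (scaledSchurComplement a B C D) := by
    simp [scaledSchurComplement, fromBlocks_multiply, Matrix.mul_assoc, adjugate_mul,
      neg_add_eq_sub]
  simpa [det_fromBlocks_zero₂₁, det_fromBlocks_zero₁₂] using (congrArg det elimination).symm

lemma det_scaledSchurComplement_of_isLeftRegular [Nonempty n] {a : Matrix m m R}
    (ha : IsLeftRegular a.det) (B : Matrix m n R) (C : Matrix n m R) (D : Matrix n n R) :
    (scaledSchurComplement a B C D).det =
      a.det ^ (Fintype.card n - 1) * (fromBlocks a B C D).det := by
  apply ha
  dsimp only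
  rw [det_mul_det_scaledSchurComplement, ← mul_assoc, mul_pow_sub_one Fintype.card_ne_zero]

lemma map_C_map_evalRingHom (N : Matrix k l R) (r : R) :
    (N.map Polynomial.C).map (Polynomial.evalRingHom r) = N := by
  ext
  simp

lemma charmatrix_neg_map_evalRingHom_zero (a : Matrix m m R) :
    (charmatrix (-a)).map (Polynomial.evalRingHom 0) = a := by
  ext i j
  by_cases h : i = j <;> simp [h]

lemma det_scaledSchurComplement [Nonempty n] (a : Matrix m m R) (B : Matrix m n R)
    (C : Matrix n m R) (D : Matrix n n R) :
    (scaledSchurComplement a B C D).det =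
      a.det ^ (Fintype.card n - 1) * (fromBlocks a B C D).det := by
  have perturbed := det_scaledSchurComplement_of_isLeftRegular
    (charpoly_monic (-a)).isRegular.left (B.map Polynomial.C) (C.map Polynomial.C)
    (D.map Polynomial.C)
  simpa only [map_mul, map_pow, RingHom.map_det, RingHom.mapMatrix_apply, fromBlocks_map,
    scaledSchurComplement_map, map_C_map_evalRingHom, charmatrix_neg_map_evalRingHom_zero]
    using congrArg (Polynomial.evalRingHom 0) perturbed

end ScaledSchurComplement

section BorderedMinors

variable {m k l n R : Type*} [Fintype m] [DecidableEq m] [Fintype n] [DecidableEq n] [CommRing R]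

/-- The matrix of the minors of `A` embordering its top-left block: the `(i, j)` entry is the
determinant of that block extended by the `i`-th remaining row and the `j`-th remaining column. -/
def borderedMinors (A : Matrix (m ⊕ k) (m ⊕ l) R) : Matrix k l R :=
  of fun i j => (A.submatrix (Sum.map id fun _ : Fin 1 => i) (Sum.map id fun _ : Fin 1 => j)).det

lemma borderedMinors_fromBlocks (a : Matrix m m R) (B : Matrix m l R) (C : Matrix k m R)
    (D : Matrix k l R) :
    borderedMinors (fromBlocks a B C D) = scaledSchurComplement a B C D := by
  ext i j
  let row : Fin 1 → k := fun _ => i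
  let col : Fin 1 → l := fun _ => j
  have embordering : (fromBlocks a B C D).submatrix (Sum.map id row) (Sum.map id col) =
      fromBlocks a (B.submatrix id col) (C.submatrix row id) (D.submatrix row col) := by
    ext (_ | _) (_ | _) <;> rfl
  calc borderedMinors (fromBlocks a B C D) i j
    _ = (fromBlocks a (B.submatrix id col) (C.submatrix row id) (D.submatrix row col)).det :=
      congrArg det embordering
    _ = (scaledSchurComplement a (B.submatrix id col) (C.submatrix row id)
          (D.submatrix row col)).det := by
      rw [det_scaledSchurComplement, Fintype.card_fin, Nat.sub_self, pow_zero, one_mul]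
    _ = scaledSchurComplement a B C D i j := det_fin_one _

theorem det_borderedMinors [Nonempty n] (A : Matrix (m ⊕ n) (m ⊕ n) R) :
    (borderedMinors A).det = A.toBlocks₁₁.det ^ (Fintype.card n - 1) * A.det := by
  conv_lhs => rw [← fromBlocks_toBlocks A]
  rw [borderedMinors_fromBlocks, det_scaledSchurComplement, fromBlocks_toBlocks]

lemma borderedMinors_submatrix_finSumFinEquiv {p q r : ℕ}
    (A : Matrix (Fin (p + q)) (Fin (p + r)) R) (i : Fin q) (j : Fin r) :
    borderedMinors (A.submatrix finSumFinEquiv finSumFinEquiv) i j =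
      (Matrix.of (Fin.snoc
        (fun s : Fin p => Fin.snoc (fun t : Fin p => A (Fin.castAdd q s) (Fin.castAdd r t))
          (A (Fin.castAdd q s) (Fin.natAdd p j)))
        (Fin.snoc (fun t : Fin p => A (Fin.natAdd p i) (Fin.castAdd r t))
          (A (Fin.natAdd p i) (Fin.natAdd p j))))).det := by
  rw [← det_submatrix_equiv_self (finSumFinEquiv : Fin p ⊕ Fin 1 ≃ Fin (p + 1))]
  have natAdd_eq_last (x : Fin 1) : Fin.natAdd p x = Fin.last p := by ext; simp
  have castAdd_eq_castSucc (x : Fin p) : Fin.castAdd 1 x = x.castSucc := rfl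
  rw [borderedMinors, of_apply]
  congr 1
  ext (s | s) (t | t) <;> simp [natAdd_eq_last, castAdd_eq_castSucc]

end BorderedMinors

theorem sylvester_determinant_identity_general {R : Type*} [CommRing R] (p q : ℕ) (hq : 1 ≤ q)
    (A : Matrix (Fin (p + q)) (Fin (p + q)) R)
    (a : Matrix (Fin p) (Fin p) R)
    (ha : ∀ i j, a i j = A (Fin.castAdd q i) (Fin.castAdd q j))
    (M : Matrix (Fin q) (Fin q) R)
    (hM : ∀ k l, M k l =
      (Matrix.of (Fin.snoc
        (fun i : Fin p => Fin.snoc (a i) (A (Fin.castAdd q i) (Fin.natAdd p l)))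
        (Fin.snoc (fun j : Fin p => A (Fin.natAdd p k) (Fin.castAdd q j))
          (A (Fin.natAdd p k) (Fin.natAdd p l))))).det) :
    M.det = a.det ^ (q - 1) * A.det := by
  have : Nonempty (Fin q) := Fin.pos_iff_nonempty.mp hq
  obtain rfl : a = (A.submatrix finSumFinEquiv finSumFinEquiv).toBlocks₁₁ := by
    ext i j
    exact ha i j
  obtain rfl : M = borderedMinors (A.submatrix finSumFinEquiv finSumFinEquiv) := by
    ext k l
    rw [hM, borderedMinors_submatrix_finSumFinEquiv]
    rfl
  rw [det_borderedMinors, det_submatrix_equiv_self, Fintype.card_fin]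

/-- Sylvester's determinant identity: if `a` is the top-left `p × p` block of a
`(p+q) × (p+q)` real matrix `A` and `M` is the `q × q` matrix of the minors of `A`
embordering the block `a`, then `det M = (det a)^(q-1) · det A`. -/
theorem sylvester_determinant_identity (p q : ℕ) (hp : 1 ≤ p) (hq : 1 ≤ q)
    (A : Matrix (Fin (p + q)) (Fin (p + q)) ℝ)
    (a : Matrix (Fin p) (Fin p) ℝ)
    (ha : ∀ i j, a i j = A (Fin.castAdd q i) (Fin.castAdd q j))
    (M : Matrix (Fin q) (Fin q) ℝ)
    (hM : ∀ k l, M k l =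
      (Matrix.of (Fin.snoc
        (fun i : Fin p => Fin.snoc (a i) (A (Fin.castAdd q i) (Fin.natAdd p l)))
        (Fin.snoc (fun j : Fin p => A (Fin.natAdd p k) (Fin.castAdd q j))
          (A (Fin.natAdd p k) (Fin.natAdd p l))))).det) :
    M.det = a.det ^ (q - 1) * A.det :=
  sylvester_determinant_identity_general p q hq A a ha M hM
end

section
/- Let U₁,…,U_N and Ψ be as in the context, and suppose det W(U₁,…,U_M;U_{M+1},…,U_N)(x) ≠ 0 on an open interval. Define φ_j(x) = det W_j(U₁,…,U_M;U_{M+1},…,U_N,Ψ)(x) / det W(U₁,…,U_M;U_{M+1},…,U_N)(x) for j = 1,…,n. Then on that interval, φ_j′ = (Γ_j − Σ_{l=1}^n φ_l · det W_{j,l}(U₁,…,U_M;U_{M+1},…,U_N)) / det W(U₁,…,U_M;U_{M+1},…,U_N), where Γ_j is the determinant of the matrix obtained from W_j(U₁,…,U_M;U_{M+1},…,U_N,Ψ) by differentiating entrywise its last row. -/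
open Matrix

noncomputable section

namespace SingularDarboux

variable {n : ℕ}

/-- Entrywise derivative `∂` of a matrix-valued function. -/
def matD (U : ℝ → Matrix (Fin n) (Fin n) ℝ) : ℝ → Matrix (Fin n) (Fin n) ℝ :=
  fun x => Matrix.of fun i j => deriv (fun t => U t i j) x

/-- The operator `D_m` acting on matrix-valued functions: it differentiates the
first `m` rows and keeps the remaining rows unchanged. -/
def matDm (m : ℕ) (U : ℝ → Matrix (Fin n) (Fin n) ℝ) : ℝ → Matrix (Fin n) (Fin n) ℝ :=
  fun x => Matrix.of fun i j => if (i : ℕ) < m then deriv (fun t => U t i j) x else U x i j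

/-- Entrywise derivative `∂` of a vector-valued function. -/
def vecD (Ψ : ℝ → Fin n → ℝ) : ℝ → Fin n → ℝ := fun x i => deriv (fun t => Ψ t i) x

/-- The operator `D_m` (equivalently `∂^{(m)}`) acting on vector-valued functions:
it differentiates the first `m` components and keeps the remaining ones unchanged. -/
def vecDm (m : ℕ) (Ψ : ℝ → Fin n → ℝ) : ℝ → Fin n → ℝ :=
  fun x i => if (i : ℕ) < m then deriv (fun t => Ψ t i) x else Ψ x i

/-- All entries of the matrix-valued function are smooth. -/
def SmoothMat (U : ℝ → Matrix (Fin n) (Fin n) ℝ) : Prop :=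
  ∀ i j, ContDiff ℝ (⊤ : ℕ∞) fun x => U x i j

/-- All components of the vector-valued function are smooth. -/
def SmoothVec (Ψ : ℝ → Fin n → ℝ) : Prop := ∀ i, ContDiff ℝ (⊤ : ℕ∞) fun x => Ψ x i

/-- `U = diag(Ũ, I_{n-m})`: outside of the top-left `m × m` block, `U` coincides with
the identity matrix. -/
def BlockDiag (m : ℕ) (U : ℝ → Matrix (Fin n) (Fin n) ℝ) : Prop :=
  ∀ (x : ℝ) (i j : Fin n), (m ≤ (i : ℕ) ∨ m ≤ (j : ℕ)) → U x i j = if i = j then 1 else 0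

/-- The `(r,k)` block (`r,k` $0$-indexed) of the matrix `W(U₁,…,U_M;U_{M+1},…,U_N)`. -/
def Wblock (m M r k : ℕ) (U : ℝ → Matrix (Fin n) (Fin n) ℝ) : ℝ → Matrix (Fin n) (Fin n) ℝ :=
  if k < M then (if r ≤ k then (matDm m)^[r] U else matD^[r] U)
  else (if r < M then (matDm m)^[r] U else matD^[r - M] ((matDm m)^[M] U))

/-- The `r`-th block of the column appended on the right in `W_j`. -/
def Wcol (m M r : ℕ) (Ψ : ℝ → Fin n → ℝ) : ℝ → Fin n → ℝ :=
  if r < M then (vecDm m)^[r] Ψ else vecD^[r - M] ((vecDm m)^[M] Ψ)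

/-- The `i`-th row of the `k`-th block of the row appended at the bottom in `W_j`
(also the replacement row used in `W_{i,j}`). -/
def Wrow (m M N k : ℕ) (U : ℝ → Matrix (Fin n) (Fin n) ℝ) (i : Fin n) : ℝ → Fin n → ℝ :=
  if k < M then (fun x => matD^[N] U x i) else (fun x => matD^[N - M] ((matDm m)^[M] U) x i)

/-- The `nN × nN` matrix `W(U₁,…,U_M;U_{M+1},…,U_N)`; rows are indexed by pairs
(block-row `r`, row `i` within the block) and similarly for columns. -/
def Wmat (m M N : ℕ) (U : ℕ → ℝ → Matrix (Fin n) (Fin n) ℝ) (x : ℝ) :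
    Matrix (Fin N × Fin n) (Fin N × Fin n) ℝ :=
  Matrix.of fun p q => Wblock m M (p.1 : ℕ) (q.1 : ℕ) (U (q.1 : ℕ)) x p.2 q.2

/-- The `(nN+1) × (nN+1)` matrix `W_j(U₁,…,U_M;U_{M+1},…,U_N,Ψ)`. -/
def WjMat (m M N : ℕ) (j : Fin n) (U : ℕ → ℝ → Matrix (Fin n) (Fin n) ℝ)
    (Ψ : ℝ → Fin n → ℝ) (x : ℝ) :
    Matrix ((Fin N × Fin n) ⊕ Unit) ((Fin N × Fin n) ⊕ Unit) ℝ :=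
  Matrix.of fun p q =>
    match p, q with
    | Sum.inl p, Sum.inl q => Wblock m M (p.1 : ℕ) (q.1 : ℕ) (U (q.1 : ℕ)) x p.2 q.2
    | Sum.inl p, Sum.inr _ => Wcol m M (p.1 : ℕ) Ψ x p.2
    | Sum.inr _, Sum.inl q => Wrow m M N (q.1 : ℕ) (U (q.1 : ℕ)) j x q.2
    | Sum.inr _, Sum.inr _ => vecD^[N - M] ((vecDm m)^[M] Ψ) x j

/-- The `nN × nN` matrix `W_{i,j}(U₁,…,U_M;U_{M+1},…,U_N)`: in the last block-row
(`r = N-1`) of `W` the `j`-th row of each block is replaced as prescribed. -/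
def WijMat (m M N : ℕ) (i j : Fin n) (U : ℕ → ℝ → Matrix (Fin n) (Fin n) ℝ) (x : ℝ) :
    Matrix (Fin N × Fin n) (Fin N × Fin n) ℝ :=
  Matrix.of fun p q =>
    if (p.1 : ℕ) = N - 1 ∧ p.2 = j then Wrow m M N (q.1 : ℕ) (U (q.1 : ℕ)) i x q.2
    else Wblock m M (p.1 : ℕ) (q.1 : ℕ) (U (q.1 : ℕ)) x p.2 q.2


/-!
Where `det W ≠ 0`, the determinant of `W` bordered by a column `c`, a row `a` and a corner entry
`b`, divided by `det W`, is the Schur complement `φ = b - a W⁻¹ c`, so that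
`φ' = (b' - a' W⁻¹ c) - a W⁻¹ (c' - W' W⁻¹ c)`. The first bracket is `Γ / det W`. In the second
term, the `p`-th entry of `a W⁻¹` is, by Cramer's rule, the determinant of `W` with its row `p`
replaced by `a`, over `det W`; the `p`-th entry of `c' - W' W⁻¹ c` is again a bordered determinant
over `det W`, with the derivative of the row `p` of `(W | c)` as bottom row.

Let `p = (r, i)`. If `i < m` or `M ≤ r`, that derivative is the row `(r + 1, i)`: for `r < N - 1`
it repeats a row of `(W | c)`, so the bordered determinant vanishes, and for `r = N - 1` it is the
bottom row of `W_i`. If `m ≤ i` and `r < M`, the shape `diag(Ũ, I)` makes the Cramer factor vanish.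
Only the `n` products `det W_l * det W_{j,l}` remain.
-/

section BorderedDeterminant

variable {R ι : Type*}

/-- The block matrix `(A c; r d)`: the square matrix `A` bordered by the column `c`, the row `r` and
the corner entry `d`. -/
def bordered (A : Matrix ι ι R) (c r : ι → R) (d : R) : Matrix (ι ⊕ Unit) (ι ⊕ Unit) R :=
  fromBlocks A (replicateCol Unit c) (replicateRow Unit r) (of fun _ _ => d)

theorem updateRow_bordered [DecidableEq ι] (A : Matrix ι ι R) (c r : ι → R) (d : R)
    (v : ι ⊕ Unit → R) :
    (bordered A c r d).updateRow (Sum.inr ()) v =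
      bordered A c (fun q => v (Sum.inl q)) (v (Sum.inr ())) := by
  ext (p | p) (q | q) <;> simp [bordered, updateRow_apply]

variable [CommRing R] [Fintype ι] [DecidableEq ι]

theorem det_bordered_row_self (A : Matrix ι ι R) (c : ι → R) (p : ι) :
    (bordered A c (A p) (c p)).det = 0 :=
  det_zero_of_row_eq (i := Sum.inl p) (j := Sum.inr ()) Sum.inl_ne_inr <| by
    ext (q | q) <;> rfl

theorem det_bordered_mulVec (A : Matrix ι ι R) (z r : ι → R) (d : R) :
    (bordered A (A *ᵥ z) r d).det = A.det * (d - r ⬝ᵥ z) := by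
  have factorization : bordered A (A *ᵥ z) r d =
      fromBlocks A 0 (replicateRow Unit r) (of fun _ _ => d - r ⬝ᵥ z) *
        fromBlocks 1 (replicateCol Unit z) 0 1 := by
    rw [fromBlocks_multiply]
    ext (p | p) (q | q) <;> simp [bordered, mul_apply, mulVec, dotProduct]
  rw [factorization, det_mul, det_fromBlocks_zero₁₂, det_fromBlocks_zero₂₁]
  simp

theorem det_bordered_div_det {K : Type*} [Field K] {A : Matrix ι ι K} (hA : A.det ≠ 0)
    (c r : ι → K) (d : K) :
    (bordered A c r d).det / A.det = d - r ⬝ᵥ A⁻¹ *ᵥ c := by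
  have h := det_bordered_mulVec A (A⁻¹ *ᵥ c) r d
  rw [mulVec_mulVec, mul_nonsing_inv A hA.isUnit, one_mulVec] at h
  rw [h, mul_div_cancel_left₀ _ hA]

theorem vecMul_inv_apply_eq_det_updateRow_div {K : Type*} [Field K] {A : Matrix ι ι K}
    (hA : A.det ≠ 0) (r : ι → K) (p : ι) :
    (r ᵥ* A⁻¹) p = (A.updateRow p r).det / A.det := by
  rw [eq_div_iff hA, ← cramer_transpose_apply,
    ← det_smul_inv_vecMul_eq_cramer_transpose A r hA.isUnit, Pi.smul_apply, smul_eq_mul, mul_comm]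

end BorderedDeterminant

section Derivative

variable {𝕜 ι : Type*} [NontriviallyNormedField 𝕜] [Fintype ι] {x : 𝕜}

theorem hasDerivAt_dotProduct {u v : 𝕜 → ι → 𝕜} {u' v' : ι → 𝕜}
    (hu : HasDerivAt u u' x) (hv : HasDerivAt v v' x) :
    HasDerivAt (fun t => u t ⬝ᵥ v t) (u' ⬝ᵥ v x + u x ⬝ᵥ v') x := by
  simp only [dotProduct, ← Finset.sum_add_distrib]
  exact HasDerivAt.fun_sum fun p _ => (hasDerivAt_pi.1 hu p).fun_mul (hasDerivAt_pi.1 hv p)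

variable [DecidableEq ι] {W : 𝕜 → Matrix ι ι 𝕜}

theorem differentiableAt_det (hW : ∀ p q, DifferentiableAt 𝕜 (fun t => W t p q) x) :
    DifferentiableAt 𝕜 (fun t => (W t).det) x := by
  simp only [det_apply]
  exact DifferentiableAt.fun_sum fun σ _ =>
    (DifferentiableAt.fun_finsetProd fun i _ => hW _ _).const_smul _

theorem differentiableAt_inv_mulVec {c : 𝕜 → ι → 𝕜}
    (hW : ∀ p q, DifferentiableAt 𝕜 (fun t => W t p q) x) (hc : DifferentiableAt 𝕜 c x)
    (hdet : (W x).det ≠ 0) :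
    DifferentiableAt 𝕜 (fun t => (W t)⁻¹ *ᵥ c t) x := by
  simp only [inv_def, Ring.inverse_eq_inv', smul_mulVec, ← cramer_eq_adjugate_mulVec]
  refine ((differentiableAt_det hW).inv hdet).smul (differentiableAt_pi.2 fun i => ?_)
  simp only [cramer_apply]
  refine differentiableAt_det fun p q => ?_
  simp only [updateCol_apply]
  split_ifs
  · exact differentiableAt_pi.1 hc p
  · exact hW p q

variable {W' : Matrix ι ι 𝕜} {c a : 𝕜 → ι → 𝕜} {c' a' : ι → 𝕜}

theorem hasDerivAt_inv_mulVec (hW : ∀ p, HasDerivAt (fun t => W t p) (W' p) x)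
    (hc : HasDerivAt c c' x) (hdet : (W x).det ≠ 0) :
    HasDerivAt (fun t => (W t)⁻¹ *ᵥ c t)
      ((W x)⁻¹ *ᵥ (c' - W' *ᵥ ((W x)⁻¹ *ᵥ c x))) x := by
  have hW_entry : ∀ p q, DifferentiableAt 𝕜 (fun t => W t p q) x := fun p q =>
    (hasDerivAt_pi.1 (hW p) q).differentiableAt
  set z : 𝕜 → ι → 𝕜 := fun t => (W t)⁻¹ *ᵥ c t
  have hz : HasDerivAt z (deriv z x) x :=
    (differentiableAt_inv_mulVec hW_entry hc.differentiableAt hdet).hasDerivAt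
  have h_solves : (fun t => W t *ᵥ z t) =ᶠ[nhds x] c := by
    filter_upwards [(differentiableAt_det hW_entry).continuousAt.eventually_ne hdet] with t ht
    simp only [z, mulVec_mulVec, mul_nonsing_inv _ ht.isUnit, one_mulVec]
  have h_product : HasDerivAt (fun t => W t *ᵥ z t) (W' *ᵥ z x + W x *ᵥ deriv z x) x :=
    hasDerivAt_pi.2 fun p => hasDerivAt_dotProduct (hW p) hz
  have hc' : c' = W' *ᵥ z x + W x *ᵥ deriv z x :=
    hc.unique (h_product.congr_of_eventuallyEq h_solves.symm)
  convert hz using 1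
  rw [hc', add_sub_cancel_left, mulVec_mulVec, nonsing_inv_mul _ hdet.isUnit, one_mulVec]

theorem hasDerivAt_det_bordered_div_det {b : 𝕜 → 𝕜} {b' : 𝕜}
    (hW : ∀ p, HasDerivAt (fun t => W t p) (W' p) x) (hc : HasDerivAt c c' x)
    (ha : HasDerivAt a a' x) (hb : HasDerivAt b b' x) (hdet : (W x).det ≠ 0) :
    HasDerivAt (fun t => (bordered (W t) (c t) (a t) (b t)).det / (W t).det)
      (((bordered (W x) (c x) a' b').det -
        (∑ p, (bordered (W x) (c x) (W' p) (c' p)).det * ((W x).updateRow p (a x)).det) /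
          (W x).det) / (W x).det) x := by
  have hdet_near : ∀ᶠ t in nhds x, (W t).det ≠ 0 :=
    (differentiableAt_det fun p q =>
      (hasDerivAt_pi.1 (hW p) q).differentiableAt).continuousAt.eventually_ne hdet
  have h_schur : (fun t => (bordered (W t) (c t) (a t) (b t)).det / (W t).det) =ᶠ[nhds x]
      fun t => b t - a t ⬝ᵥ (W t)⁻¹ *ᵥ c t :=
    hdet_near.mono fun t ht => det_bordered_div_det ht _ _ _
  convert! (hb.fun_sub (hasDerivAt_dotProduct ha
    (hasDerivAt_inv_mulVec hW hc hdet))).congr_of_eventuallyEq h_schur using 1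
  rw [sub_div, det_bordered_div_det hdet, sub_add_eq_sub_sub, dotProduct_mulVec (a x),
    Finset.sum_div, Finset.sum_div, dotProduct]
  congr 1
  refine Finset.sum_congr rfl fun p _ => ?_
  rw [vecMul_inv_apply_eq_det_updateRow_div hdet, mul_div_right_comm, det_bordered_div_det hdet,
    mul_div_assoc, mul_comm]
  rfl

end Derivative

section BlockEntries

theorem matD_iterate_apply (r : ℕ) (U : ℝ → Matrix (Fin n) (Fin n) ℝ) (x : ℝ) (i q : Fin n) :
    matD^[r] U x i q = iteratedDeriv r (fun t => U t i q) x := by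
  induction r generalizing x with
  | zero => rfl
  | succ r ih => simp only [Function.iterate_succ_apply', matD, of_apply, ih, iteratedDeriv_succ]

theorem matDm_iterate_apply (m r : ℕ) (U : ℝ → Matrix (Fin n) (Fin n) ℝ) (x : ℝ) (i q : Fin n) :
    (matDm m)^[r] U x i q = iteratedDeriv (if (i : ℕ) < m then r else 0) (fun t => U t i q) x := by
  induction r generalizing x with
  | zero => simp
  | succ r ih =>
    simp only [Function.iterate_succ_apply', matDm, of_apply, ih]
    split_ifs
    · rw [iteratedDeriv_succ]
    · rfl

theorem vecD_iterate_apply (r : ℕ) (Ψ : ℝ → Fin n → ℝ) (x : ℝ) (i : Fin n) :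
    vecD^[r] Ψ x i = iteratedDeriv r (fun t => Ψ t i) x := by
  induction r generalizing x with
  | zero => rfl
  | succ r ih => simp only [Function.iterate_succ_apply', vecD, ih, iteratedDeriv_succ]

theorem vecDm_iterate_apply (m r : ℕ) (Ψ : ℝ → Fin n → ℝ) (x : ℝ) (i : Fin n) :
    (vecDm m)^[r] Ψ x i = iteratedDeriv (if (i : ℕ) < m then r else 0) (fun t => Ψ t i) x := by
  induction r generalizing x with
  | zero => simp
  | succ r ih =>
    simp only [Function.iterate_succ_apply', vecDm, ih]
    split_ifs
    · rw [iteratedDeriv_succ]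
    · rfl

/-- The number of times row `i` of `U_k` is differentiated in the block `(r, k)` of `W`. The column
appended to `W` follows the rule for the block-columns `k ≥ M`. -/
def blockOrder (m M r k i : ℕ) : ℕ :=
  if i < m then r else if k < M then (if r ≤ k then 0 else r) else r - M

theorem blockOrder_le (m M r k i : ℕ) : blockOrder m M r k i ≤ r := by
  unfold blockOrder; split_ifs <;> omega

theorem blockOrder_succ {m M r i : ℕ} (h : i < m ∨ M ≤ r) (k : ℕ) :
    blockOrder m M (r + 1) k i = blockOrder m M r k i + 1 := by
  unfold blockOrder; split_ifs <;> omega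

theorem iteratedDeriv_iteratedDeriv_blockOrder {m M r k i : ℕ} (f : ℝ → ℝ) (hk : M ≤ k)
    (hr : M ≤ r) :
    iteratedDeriv (r - M) (iteratedDeriv (if i < m then M else 0) f) =
      iteratedDeriv (blockOrder m M r k i) f := by
  simp only [iteratedDeriv_eq_iterate, ← Function.iterate_add_apply]
  congr 2
  unfold blockOrder; split_ifs <;> omega

theorem Wblock_apply (m M r k : ℕ) (U : ℝ → Matrix (Fin n) (Fin n) ℝ) (x : ℝ) (i q : Fin n) :
    Wblock m M r k U x i q = iteratedDeriv (blockOrder m M r k i) (fun t => U t i q) x := by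
  unfold Wblock
  split_ifs with hk hrk hr
  · simp [matDm_iterate_apply, blockOrder, hk, hrk]
  · simp [matD_iterate_apply, blockOrder, hk, hrk]
  · simp [matDm_iterate_apply, blockOrder, hk, hr.le]
  · simp only [matD_iterate_apply, matDm_iterate_apply]
    exact congrFun (iteratedDeriv_iteratedDeriv_blockOrder _ (not_lt.1 hk) (not_lt.1 hr)) x

theorem Wcol_apply (m M r : ℕ) (Ψ : ℝ → Fin n → ℝ) (x : ℝ) (i : Fin n) :
    Wcol m M r Ψ x i = iteratedDeriv (blockOrder m M r M i) (fun t => Ψ t i) x := by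
  unfold Wcol
  split_ifs with hr
  · simp [vecDm_iterate_apply, blockOrder, hr.le]
  · simp only [vecD_iterate_apply, vecDm_iterate_apply]
    exact congrFun (iteratedDeriv_iteratedDeriv_blockOrder _ le_rfl (not_lt.1 hr)) x

theorem differentiable_iteratedDeriv_blockOrder {f : ℝ → ℝ} {r : ℕ} (hf : ContDiff ℝ (r + 1) f)
    (m M k i : ℕ) : Differentiable ℝ (iteratedDeriv (blockOrder m M r k i) f) :=
  hf.differentiable_iteratedDeriv _ (mod_cast Nat.lt_succ_of_le (blockOrder_le m M r k i))

theorem Wblock_apply_of_blockDiag {m M k : ℕ} {U : ℝ → Matrix (Fin n) (Fin n) ℝ}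
    (hU : BlockDiag m U) (hk : k < M) {q : Fin n} (hq : m ≤ q) (r : ℕ) (x : ℝ) (i : Fin n) :
    Wblock m M r k U x i q = if i = q ∧ r ≤ k then 1 else 0 := by
  have hconst : (fun t => U t i q) = fun _ => if i = q then 1 else 0 :=
    funext fun t => hU t i q (Or.inr hq)
  rw [Wblock_apply, hconst, iteratedDeriv_const]
  unfold blockOrder
  split_ifs <;> first | rfl | omega

end BlockEntries

section RowsOfW

variable {m M N : ℕ}

/-- Row `i` of the block-row `r` of `W`, for any `r ∈ ℕ`: the rows of `W` are those with `r < N`,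
and `r = N` gives the row appended in `W_i`. -/
def Wline (m M N r : ℕ) (U : ℕ → ℝ → Matrix (Fin n) (Fin n) ℝ) (i : Fin n) (x : ℝ) :
    Fin N × Fin n → ℝ :=
  fun q => Wblock m M r q.1 (U q.1) x i q.2

/-- The column appended to `W` in every `W_j`, without its corner entry. -/
def Wborder (m M N : ℕ) (Ψ : ℝ → Fin n → ℝ) (x : ℝ) : Fin N × Fin n → ℝ :=
  fun p => Wcol m M p.1 Ψ x p.2

variable {U : ℕ → ℝ → Matrix (Fin n) (Fin n) ℝ} {Ψ : ℝ → Fin n → ℝ}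

theorem Wrow_eq_Wblock {k : ℕ} (hMN : M ≤ N) (hk : k < N) (V : ℝ → Matrix (Fin n) (Fin n) ℝ)
    (i : Fin n) (x : ℝ) :
    Wrow m M N k V i x = Wblock m M N k V x i := by
  unfold Wrow Wblock
  rw [if_neg hk.not_ge, if_neg hMN.not_gt]
  split_ifs <;> rfl

theorem WjMat_eq_bordered (hMN : M ≤ N) (j : Fin n) (x : ℝ) :
    WjMat m M N j U Ψ x =
      bordered (Wmat m M N U x) (Wborder m M N Ψ x) (Wline m M N N U j x) (Wcol m M N Ψ x j) := by
  ext (p | p) (q | q)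
  · rfl
  · rfl
  · exact congrFun (Wrow_eq_Wblock hMN q.1.isLt _ j x) q.2
  · simp [WjMat, bordered, Wcol, hMN.not_gt]

theorem WijMat_eq_updateRow (hMN : M ≤ N) {r : Fin N} (hr : (r : ℕ) + 1 = N) (i j : Fin n) (x : ℝ) :
    WijMat m M N i j U x = (Wmat m M N U x).updateRow (r, j) (Wline m M N N U i x) := by
  ext p q
  have hlast : (p.1 : ℕ) = N - 1 ∧ p.2 = j ↔ p = (r, j) := by
    simp only [Prod.ext_iff, Fin.ext_iff]
    omega
  simp only [WijMat, Wline, Wmat, of_apply, updateRow_apply, hlast, Wrow_eq_Wblock hMN q.1.isLt]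

theorem differentiable_Wline {r : ℕ}
    (hU : ∀ k < N, ∀ i q, ContDiff ℝ (r + 1) fun t => U k t i q) (i : Fin n) :
    Differentiable ℝ (Wline m M N r U i) :=
  differentiable_pi.2 fun q => by
    simpa only [Wline, Wblock_apply] using
      differentiable_iteratedDeriv_blockOrder (hU q.1 q.1.isLt i q.2) m M q.1 i

theorem differentiable_Wcol {r : ℕ} (hΨ : ∀ i, ContDiff ℝ (r + 1) fun t => Ψ t i) (i : Fin n) :
    Differentiable ℝ (fun t => Wcol m M r Ψ t i) := by
  simpa only [Wcol_apply] using differentiable_iteratedDeriv_blockOrder (hΨ i) m M M i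

theorem deriv_Wline {r : ℕ} {i : Fin n} (h : (i : ℕ) < m ∨ M ≤ r) {x : ℝ}
    (hd : DifferentiableAt ℝ (Wline m M N r U i) x) :
    deriv (Wline m M N r U i) x = Wline m M N (r + 1) U i x := by
  ext q
  rw [deriv_pi (differentiableAt_pi.1 hd)]
  simp only [Wline, Wblock_apply, blockOrder_succ h, iteratedDeriv_succ]

theorem deriv_Wcol {r : ℕ} {i : Fin n} (h : (i : ℕ) < m ∨ M ≤ r) (x : ℝ) :
    deriv (fun t => Wcol m M r Ψ t i) x = Wcol m M (r + 1) Ψ x i := by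
  simp only [Wcol_apply, blockOrder_succ h, iteratedDeriv_succ]

theorem updateRow_deriv_WjMat (hMN : M ≤ N) (j : Fin n) {x : ℝ}
    (hd : DifferentiableAt ℝ (Wline m M N N U j) x) :
    (WjMat m M N j U Ψ x).updateRow (Sum.inr ())
        (fun q => deriv (fun t => WjMat m M N j U Ψ t (Sum.inr ()) q) x) =
      bordered (Wmat m M N U x) (Wborder m M N Ψ x) (deriv (Wline m M N N U j) x)
        (deriv (fun t => Wcol m M N Ψ t j) x) := by
  simp only [WjMat_eq_bordered hMN, updateRow_bordered]
  rw [deriv_pi (differentiableAt_pi.1 hd)]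
  rfl

end RowsOfW

section RatioDerivative

variable {m M N : ℕ} {U : ℕ → ℝ → Matrix (Fin n) (Fin n) ℝ} {Ψ : ℝ → Fin n → ℝ}

/-- For `m ≤ i` and `k < M` the column `(k, i)` of `W` is supported on the rows `(0, i), …, (k, i)`,
where it equals `1`. Once the row `(k, i)` is replaced, this column coincides with the column
`(k - 1, i)`, or vanishes if `k = 0`. -/
theorem det_updateRow_Wline_eq_zero (hU : ∀ k < M, BlockDiag m (U k)) {k : Fin N} (hk : (k : ℕ) < M)
    {i : Fin n} (hi : m ≤ i) {s : ℕ} (hs : k < s) (j : Fin n) (x : ℝ) :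
    ((Wmat m M N U x).updateRow (k, i) (Wline m M N s U j x)).det = 0 := by
  have hcol : ∀ (l : Fin N), l ≤ k → ∀ p,
      (Wmat m M N U x).updateRow (k, i) (Wline m M N s U j x) p (l, i) =
        if p ≠ (k, i) ∧ p.2 = i ∧ p.1 ≤ l then 1 else 0 := by
    intro l hlk p
    have hlM : (l : ℕ) < M := by omega
    rw [updateRow_apply, Wline, Wmat, of_apply, Wblock_apply_of_blockDiag (hU l hlM) hlM hi,
      Wblock_apply_of_blockDiag (hU l hlM) hlM hi]
    grind
  obtain ⟨k, hkN⟩ := k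
  cases k with
  | zero =>
    refine det_eq_zero_of_column_eq_zero (⟨0, hkN⟩, i) fun p => ?_
    rw [hcol _ le_rfl]
    grind
  | succ l =>
    refine det_zero_of_column_eq (i := (⟨l, by omega⟩, i)) (j := (⟨l + 1, hkN⟩, i)) (by simp)
      fun p => ?_
    rw [hcol _ (by simp), hcol _ le_rfl]
    grind

theorem det_bordered_Wline_succ (hMN : M ≤ N) {last : Fin N} (hlast : (last : ℕ) + 1 = N)
    (r : Fin N) (i : Fin n) (x : ℝ) :
    (bordered (Wmat m M N U x) (Wborder m M N Ψ x) (Wline m M N (r + 1) U i x)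
      (Wcol m M (r + 1) Ψ x i)).det = if r = last then (WjMat m M N i U Ψ x).det else 0 := by
  split_ifs with hr
  · rw [hr, hlast, WjMat_eq_bordered hMN]
  · have hr_succ : (r : ℕ) + 1 < N := by omega
    exact det_bordered_row_self _ _ ((⟨r + 1, hr_succ⟩, i) : Fin N × Fin n)

theorem det_bordered_deriv_row_mul_det_updateRow (hMN : M ≤ N)
    (hU : ∀ k < M, BlockDiag m (U k)) {last : Fin N} (hlast : (last : ℕ) + 1 = N) (r : Fin N)
    (i j : Fin n) {x : ℝ} (hd : DifferentiableAt ℝ (Wline m M N r U i) x) :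
    (bordered (Wmat m M N U x) (Wborder m M N Ψ x) (deriv (Wline m M N r U i) x)
        (deriv (fun t => Wcol m M r Ψ t i) x)).det *
      ((Wmat m M N U x).updateRow (r, i) (Wline m M N N U j x)).det =
    if r = last then (WjMat m M N i U Ψ x).det * (WijMat m M N j i U x).det else 0 := by
  by_cases h : (i : ℕ) < m ∨ M ≤ r
  · rw [deriv_Wline h hd, deriv_Wcol h, det_bordered_Wline_succ hMN hlast, ite_mul, zero_mul]
    split_ifs with hr
    · rw [hr, WijMat_eq_updateRow hMN hlast]
    · rfl
  · obtain ⟨hi, hr⟩ := not_or.1 h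
    have hdet := det_updateRow_Wline_eq_zero hU (not_le.1 hr) (not_lt.1 hi) r.isLt j x
    rw [hdet, mul_zero]
    split_ifs with hr_last
    · rw [WijMat_eq_updateRow hMN hlast, ← hr_last, hdet, mul_zero]
    · rfl

theorem sum_det_bordered_deriv_row_mul_det_updateRow (hN : 0 < N) (hMN : M ≤ N)
    (hU : ∀ k < M, BlockDiag m (U k)) (j : Fin n) {x : ℝ}
    (hd : ∀ (r : Fin N) i, DifferentiableAt ℝ (Wline m M N r U i) x) :
    ∑ p : Fin N × Fin n, (bordered (Wmat m M N U x) (Wborder m M N Ψ x)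
        (deriv (Wline m M N p.1 U p.2) x) (deriv (fun t => Wcol m M p.1 Ψ t p.2) x)).det *
      ((Wmat m M N U x).updateRow p (Wline m M N N U j x)).det =
    ∑ l, (WjMat m M N l U Ψ x).det * (WijMat m M N j l U x).det := by
  let last : Fin N := ⟨N - 1, by omega⟩
  have hlast : (last : ℕ) + 1 = N := Nat.sub_add_cancel hN
  simp only [Fintype.sum_prod_type_right, Finset.sum_ite_eq', Finset.mem_univ, if_true,
    det_bordered_deriv_row_mul_det_updateRow hMN hU hlast _ _ j (hd _ _)]

theorem deriv_ratio_formula_general (hN : 0 < N) (hMN : M ≤ N)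
    (hUdiff : ∀ k < N, ∀ i q, ContDiff ℝ (N + 1) fun t => U k t i q)
    (hUblk : ∀ k < M, BlockDiag m (U k)) (hΨ : ∀ i, ContDiff ℝ (N + 1) fun t => Ψ t i)
    {x : ℝ} (hdet : (Wmat m M N U x).det ≠ 0) (j : Fin n) :
    HasDerivAt (fun t => (WjMat m M N j U Ψ t).det / (Wmat m M N U t).det)
      ((((WjMat m M N j U Ψ x).updateRow (Sum.inr ())
          (fun q => deriv (fun t => WjMat m M N j U Ψ t (Sum.inr ()) q) x)).det -
        ∑ l : Fin n, (WjMat m M N l U Ψ x).det / (Wmat m M N U x).det *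
          (WijMat m M N j l U x).det) / (Wmat m M N U x).det) x := by
  have hline : ∀ r ≤ N, ∀ i, DifferentiableAt ℝ (Wline m M N r U i) x := fun r hr i =>
    differentiable_Wline (fun k hk i q => (hUdiff k hk i q).of_le (by gcongr)) i x
  have hcol : ∀ r ≤ N, ∀ i, DifferentiableAt ℝ (fun t => Wcol m M r Ψ t i) x := fun r hr i =>
    differentiable_Wcol (fun i => (hΨ i).of_le (by gcongr)) i x
  simp only [div_mul_eq_mul_div, ← Finset.sum_div]
  rw [updateRow_deriv_WjMat hMN j (hline N le_rfl j),
    ← sum_det_bordered_deriv_row_mul_det_updateRow hN hMN hUblk j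
      fun r => hline r r.isLt.le]
  simp only [WjMat_eq_bordered hMN]
  exact hasDerivAt_det_bordered_div_det
    (fun p => (hline p.1 p.1.isLt.le p.2).hasDerivAt)
    (hasDerivAt_pi.2 fun p => (hcol p.1 p.1.isLt.le p.2).hasDerivAt)
    (hline N le_rfl j).hasDerivAt (hcol N le_rfl j).hasDerivAt hdet

end RatioDerivative

/-- Lemma 2 of the paper: derivative of the ratio
`φ_j = det W_j(U₁,…,U_M;U_{M+1},…,U_N,Ψ) / det W(U₁,…,U_M;U_{M+1},…,U_N)`. -/
theorem deriv_ratio_formula {n : ℕ} (m M N : ℕ)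
    (hm : 1 ≤ m) (hmn : m < n) (hM : 1 ≤ M) (hMN : M ≤ N)
    (U : ℕ → ℝ → Matrix (Fin n) (Fin n) ℝ) (Ψ : ℝ → Fin n → ℝ)
    (hUsmooth : ∀ k < N, SmoothMat (U k)) (hUblk : ∀ k < M, BlockDiag m (U k))
    (hΨ : SmoothVec Ψ)
    (a b : ℝ) (hdet : ∀ x ∈ Set.Ioo a b, (Wmat m M N U x).det ≠ 0)
    (φ : Fin n → ℝ → ℝ)
    (hφ : ∀ j x, φ j x = (WjMat m M N j U Ψ x).det / (Wmat m M N U x).det)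
    (Γ : Fin n → ℝ → ℝ)
    (hΓ : ∀ j x, Γ j x =
      ((WjMat m M N j U Ψ x).updateRow (Sum.inr ())
        (fun q => deriv (fun t => WjMat m M N j U Ψ t (Sum.inr ()) q) x)).det) :
    ∀ (j : Fin n), ∀ x ∈ Set.Ioo a b,
      deriv (φ j) x =
        (Γ j x - ∑ l : Fin n, φ l x * (WijMat m M N j l U x).det)
          / (Wmat m M N U x).det := by
  intro j x hx
  obtain rfl := funext₂ hφ
  obtain rfl := funext₂ hΓ
  exact (deriv_ratio_formula_general (hM.trans hMN) hMN
    (fun k hk i q => (hUsmooth k hk i q).of_le (mod_cast le_top)) hUblk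
    (fun i => (hΨ i).of_le (mod_cast le_top)) (hdet x hx) j).deriv

end SingularDarboux
end
end

section
/- Let 1 ≤ m < n, let Ũ₁ be a smooth m×m matrix-valued function of x with det Ũ₁(x) ≠ 0, set U₁ = diag(Ũ₁, I_{n−m}), and let Ψ = (ψ₁,…,ψₙ)ᵗ be a smooth n-vector-valued function. Define Φ = D_mΨ − (∂U₁)U₁⁻¹Ψ. Then for every l ∈ {1,…,n}, the l-th component of Φ equals φ_l = det W_l(U₁,Ψ) / det U₁, where W_l(U₁,Ψ) is the (n+1)×(n+1) matrix obtained from U₁ by appending the column Ψ on the right and, at the bottom, the row equal to the derivative of the l-th row of U₁, with corner entry ∂^{(m)}ψ_l. -/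
open Matrix

noncomputable section

namespace SingularDarboux

variable {n : ℕ}

/-!
The Schur complement of `U` in the bordered matrix is the scalar `d - r U⁻¹ v`, where `v` is the
appended column, `r` the appended row and `d` the corner. When `r` is the `l`-th row of `∂U` and `d`
the `l`-th component of `D_m Ψ`, this scalar is the `l`-th component of `Φ`.
-/

section BorderedMatrix

variable {ι κ R K : Type*}

/-- The matrix `A` bordered by the column `v` on the right, the row `r` at the bottom and the
corner entry `d`; the added index is `Sum.inr ()`. -/
def borderedMatrix (A : Matrix ι ι R) (v r : ι → R) (d : R) : Matrix (ι ⊕ Unit) (ι ⊕ Unit) R :=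
  fromBlocks A (replicateCol Unit v) (replicateRow Unit r) (of fun _ _ => d)

variable [Fintype ι] [DecidableEq ι] [CommRing R] [Field K]

theorem det_borderedMatrix {A : Matrix ι ι R} (hA : IsUnit A.det) (v r : ι → R) (d : R) :
    (borderedMatrix A v r d).det = A.det * (d - r ⬝ᵥ A⁻¹ *ᵥ v) := by
  let := invertibleOfIsUnitDet A hA
  rw [borderedMatrix, det_fromBlocks₁₁, invOf_eq_nonsing_inv, Matrix.mul_assoc,
    ← replicateCol_mulVec, det_unique (n := Unit)]
  rfl

/-- Here `A`, `B`, `v`, `w` play the roles of `U`, `∂U`, `Ψ`, `D_m Ψ` at a fixed point `x`. -/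
theorem singular_first_order_action_general {A : Matrix ι ι K} (hA : A.det ≠ 0)
    (B : Matrix κ ι K) (v : ι → K) (w : κ → K) (l : κ) :
    (w - (B * A⁻¹) *ᵥ v) l = (borderedMatrix A v (B l) (w l)).det / A.det := by
  rw [det_borderedMatrix hA.isUnit, mul_div_cancel_left₀ _ hA, ← mulVec_mulVec]
  rfl

end BorderedMatrix

/-- Action of a single singular Darboux transformation
`Φ = D_m Ψ − (∂U₁)U₁⁻¹ Ψ`, with `U₁ = diag(Ũ₁, I_{n-m})`: each component is the
ratio of a bordered determinant by `det U₁`. -/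
theorem singular_first_order_action {n : ℕ} (m : ℕ) (hm : 1 ≤ m) (hmn : m < n)
    (U : ℝ → Matrix (Fin n) (Fin n) ℝ)
    (hUsmooth : SmoothMat U) (hUblk : BlockDiag m U)
    (hUdet : ∀ x, (U x).det ≠ 0)
    (Ψ : ℝ → Fin n → ℝ) (hΨ : SmoothVec Ψ)
    (Φ : ℝ → Fin n → ℝ)
    (hΦ : ∀ x, Φ x = vecDm m Ψ x - (matD U x * (U x)⁻¹).mulVec (Ψ x)) :
    ∀ (l : Fin n) (x : ℝ),
      Φ x l =
        (Matrix.of (fun p q : Fin n ⊕ Unit =>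
          match p, q with
          | Sum.inl i, Sum.inl j => U x i j
          | Sum.inl i, Sum.inr _ => Ψ x i
          | Sum.inr _, Sum.inl j => deriv (fun t => U t l j) x
          | Sum.inr _, Sum.inr _ => vecDm m Ψ x l)).det / (U x).det := by
  intro l x
  rw [hΦ, singular_first_order_action_general (hUdet x)]
  congr 2
  ext (i | _) (j | _) <;> rfl

end SingularDarboux
end
end

section
/- Let M = N ≥ 2 and let U₁,…,U_N be as in the context (all of block-diagonal form diag(Ũ_k, I_{n−m})) with det W(U₁,…,U_{N−1}) ≠ 0. Write U_N = (U_{1;N},…,U_{n;N}) as a collection of its columns, and let Y_N be the n×n matrix with entries y_{ji} = det W_j(U₁,…,U_{N−1}, U_{i;N}) / det W(U₁,…,U_{N−1}). Then det Y_N = det W(U₁,…,U_N) / det W(U₁,…,U_{N−1}). -/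
open Matrix

noncomputable section

namespace SingularDarboux

variable {n : ℕ}

/-!
Every `W_j(U₁,…,U_M;U_{M+1},…,U_N,U_{i;N+1})` is a bordered minor of the single matrix
`W(U₁,…,U_M;U_{M+1},…,U_{N+1})`: it arises from it by keeping, in the last block-row and the last
block-column, only row `j` and column `i`. The ratios `y_{ji}` are thus the entries of the Schur
complement of `W(U₁,…,U_M;U_{M+1},…,U_N)`, whose determinant is the quotient of the two
`W`-determinants. A purely singular chain is the case `M = N`: the last block-column of
`W(U₁,…,U_{N+1})` is the same as that of `W(U₁,…,U_N;U_{N+1})`, with blocks `D_m^r U_{N+1}`.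
-/

section BorderedMinors

variable {ι κ : Type*} [Fintype ι] [DecidableEq ι]

theorem det_submatrix_border {R : Type*} [CommRing R] (P : Matrix (ι ⊕ κ) (ι ⊕ κ) R)
    [Invertible P.toBlocks₁₁] (j i : κ) :
    (P.submatrix (Sum.map id fun _ : Unit => j) (Sum.map id fun _ : Unit => i)).det =
      P.toBlocks₁₁.det * (P.toBlocks₂₂ - P.toBlocks₂₁ * ⅟P.toBlocks₁₁ * P.toBlocks₁₂) j i := by
  have hblocks : P.submatrix (Sum.map id fun _ : Unit => j) (Sum.map id fun _ : Unit => i) =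
      fromBlocks P.toBlocks₁₁ (P.toBlocks₁₂.submatrix id fun _ => i)
        (P.toBlocks₂₁.submatrix (fun _ => j) id)
        (P.toBlocks₂₂.submatrix (fun _ => j) fun _ => i) := by
    ext (p | p) (q | q) <;> rfl
  rw [hblocks, det_fromBlocks₁₁, det_unique (n := Unit)]
  simp [mul_apply]

/-- Sylvester's identity: both sides are the determinant of the Schur complement of the leading
block. -/
theorem det_of_det_submatrix_border_div [Fintype κ] [DecidableEq κ] {F : Type*} [Field F]
    (P : Matrix (ι ⊕ κ) (ι ⊕ κ) F) (hP : P.toBlocks₁₁.det ≠ 0) :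
    (of fun j i =>
      (P.submatrix (Sum.map id fun _ : Unit => j) (Sum.map id fun _ : Unit => i)).det /
        P.toBlocks₁₁.det).det = P.det / P.toBlocks₁₁.det := by
  have : Invertible P.toBlocks₁₁ := P.toBlocks₁₁.invertibleOfIsUnitDet hP.isUnit
  have hdet : P.det = P.toBlocks₁₁.det *
      (P.toBlocks₂₂ - P.toBlocks₂₁ * ⅟P.toBlocks₁₁ * P.toBlocks₁₂).det := by
    rw [← det_fromBlocks₁₁, fromBlocks_toBlocks]
  rw [hdet, mul_div_cancel_left₀ _ hP]
  congr 1
  ext j i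
  rw [of_apply, det_submatrix_border, mul_div_cancel_left₀ _ hP]

end BorderedMinors

theorem semiconj_col_matD (i : Fin n) :
    Function.Semiconj (fun V t l => V t l i) (matD (n := n)) vecD :=
  fun _ => rfl

theorem semiconj_col_matDm (m : ℕ) (i : Fin n) :
    Function.Semiconj (fun V t l => V t l i) (matDm (n := n) m) (vecDm m) :=
  fun _ => rfl

section Blocks

variable (m : ℕ) {M N k : ℕ} (V : ℝ → Matrix (Fin n) (Fin n) ℝ)

theorem Wcol_eq_col_Wblock (hk : M ≤ k) (r : ℕ) (i : Fin n) :
    Wcol m M r (fun t l => V t l i) = fun t l => Wblock m M r k V t l i := by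
  have hD := semiconj_col_matD (n := n) i
  have hDm := semiconj_col_matDm (n := n) m i
  simp only [Wcol, Wblock, hk.not_gt, if_false]
  split_ifs
  · exact (hDm.iterate_right r V).symm
  · exact ((hD.iterate_right (r - M)).comp_right (hDm.iterate_right M) V).symm

theorem Wrow_eq_row_Wblock (hM : M ≤ N) (hk : k < N) (j : Fin n) :
    Wrow m M N k V j = fun t => Wblock m M N k V t j := by
  simp only [Wrow, Wblock, hk.not_ge, hM.not_gt, if_false]
  split_ifs <;> rfl

theorem Wblock_succ_left (N : ℕ) (hk : k ≤ N) {r : ℕ} (hr : r ≤ N) :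
    Wblock m (N + 1) r k V = Wblock m N r k V := by
  rcases hk.lt_or_eq with hk | rfl
  · simp [Wblock, hk, hk.trans (Nat.lt_succ_self N)]
  · rcases hr.lt_or_eq with hr | rfl
    · simp [Wblock, hr, hr.le]
    · simp [Wblock]

end Blocks

/-- Separates the last of `N + 1` block indices from the others. -/
def lastBlockEquiv (N : ℕ) (α : Type*) : (Fin N × α) ⊕ α ≃ Fin (N + 1) × α :=
  (Equiv.sumComm _ _).trans
    (optionProdEquiv.symm.trans (finSuccEquivLast.symm.prodCongr (Equiv.refl α)))

@[simp]
theorem lastBlockEquiv_inl (N : ℕ) {α : Type*} (p : Fin N × α) :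
    lastBlockEquiv N α (Sum.inl p) = (p.1.castSucc, p.2) := by
  simp [lastBlockEquiv, Prod.map]

@[simp]
theorem lastBlockEquiv_inr (N : ℕ) {α : Type*} (a : α) :
    lastBlockEquiv N α (Sum.inr a) = (Fin.last N, a) := by
  simp [lastBlockEquiv]

section Wronskian

variable (m : ℕ) (U : ℕ → ℝ → Matrix (Fin n) (Fin n) ℝ) (x : ℝ)

theorem Wmat_succ_succ (N : ℕ) : Wmat m (N + 1) (N + 1) U x = Wmat m N (N + 1) U x := by
  ext p q
  simp only [Wmat, of_apply, Wblock_succ_left m _ N q.1.is_le p.1.is_le]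

theorem toBlocks₁₁_Wmat_succ (M N : ℕ) :
    ((Wmat m M (N + 1) U x).submatrix (lastBlockEquiv N _) (lastBlockEquiv N _)).toBlocks₁₁ =
      Wmat m M N U x := by
  ext p q
  simp [toBlocks₁₁, Wmat]

theorem WjMat_eq_submatrix_Wmat {M N : ℕ} (hM : M ≤ N) (j i : Fin n) :
    WjMat m M N j U (fun t l => U N t l i) x =
      ((Wmat m M (N + 1) U x).submatrix (lastBlockEquiv N _) (lastBlockEquiv N _)).submatrix
        (Sum.map id fun _ => j) (Sum.map id fun _ => i) := by
  have hcorner (Ψ : ℝ → Fin n → ℝ) : vecD^[N - M] ((vecDm m)^[M] Ψ) = Wcol m M N Ψ :=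
    (if_neg hM.not_gt).symm
  ext (p | p) (q | q) <;>
    simp [WjMat, Wmat, hcorner, Wcol_eq_col_Wblock m _ hM, Wrow_eq_row_Wblock m _ hM]

/-- The determinant identity for mixed chains. Since `U` is indexed from `0`, the matrix `U N` is
the last one of `U₁,…,U_M;U_{M+1},…,U_{N+1}`. -/
theorem det_YN_formula_general {M N : ℕ} (hM : M ≤ N) (hW : (Wmat m M N U x).det ≠ 0) :
    (of fun j i => (WjMat m M N j U (fun t l => U N t l i) x).det / (Wmat m M N U x).det).det =
      (Wmat m M (N + 1) U x).det / (Wmat m M N U x).det := by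
  have hsylvester := det_of_det_submatrix_border_div
    ((Wmat m M (N + 1) U x).submatrix (lastBlockEquiv N _) (lastBlockEquiv N _))
  simp only [← WjMat_eq_submatrix_Wmat m U x hM, toBlocks₁₁_Wmat_succ,
    det_submatrix_equiv_self] at hsylvester
  exact hsylvester hW

end Wronskian

/-- Determinant of the matrix `Y_N` built from ratios of `W_j`-determinants
(columns of `U_N` as the appended vector), for a purely singular chain (`M = N`):
`det Y_N = det W(U₁,…,U_N) / det W(U₁,…,U_{N-1})`. -/
theorem det_YN_formula {n : ℕ} (m N : ℕ) (hm : 1 ≤ m) (hmn : m < n) (hN : 2 ≤ N)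
    (U : ℕ → ℝ → Matrix (Fin n) (Fin n) ℝ)
    (hUsmooth : ∀ k < N, SmoothMat (U k)) (hUblk : ∀ k < N, BlockDiag m (U k))
    (Y : ℝ → Matrix (Fin n) (Fin n) ℝ)
    (hY : ∀ (x : ℝ) (j i : Fin n),
      Y x j i =
        (WjMat m (N - 1) (N - 1) j U (fun t l => U (N - 1) t l i) x).det
          / (Wmat m (N - 1) (N - 1) U x).det) :
    ∀ x : ℝ, (Wmat m (N - 1) (N - 1) U x).det ≠ 0 →
      (Y x).det = (Wmat m N N U x).det / (Wmat m (N - 1) (N - 1) U x).det := by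
  intro x hW
  obtain ⟨K, rfl⟩ := Nat.exists_eq_add_one_of_ne_zero (by lia : N ≠ 0)
  rw [Wmat_succ_succ]
  exact (congrArg det (Matrix.ext (hY x))).trans (det_YN_formula_general m U x le_rfl hW)

end SingularDarboux
end
end

section
/- First-order matrix Darboux transformation (regular case): let V₀ be a smooth n×n real matrix-valued function on an open interval, let Λ be a constant real n×n diagonal matrix, and let U be a smooth n×n matrix-valued function with U(x) invertible on the interval and satisfying −U″ + V₀U = UΛ. Set F₁ = (∂U)U⁻¹ and V₁ = V₀ − 2∂F₁. If Ψ is a smooth n-vector-valued function satisfying −Ψ″ + V₀Ψ = EΨ for a real constant E, then Φ = Ψ′ − F₁Ψ satisfies −Φ″ + V₁Φ = EΦ on the interval. -/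
open Matrix

noncomputable section

namespace SingularDarboux

variable {n : ℕ}

/-!
Put `F = U' U⁻¹` and `G = U Λ U⁻¹`. In terms of `F` the equation for `U` is the Riccati equation
`F' + F² = V₀ - G`, and `G` satisfies the Lax equation `G' = F G - G F`. By the Riccati equation,
`Φ = Ψ' - F Ψ` has the derivative `Φ' = G Ψ - E Ψ - F Φ`. Differentiating this once more, with the
Lax equation for `G'` and `Ψ' = Φ + F Ψ`, all terms in `Ψ` cancel and what is left is
`Φ″ = (G + F² - F') Φ - E Φ = (V₀ - 2 F') Φ - E Φ`. The computation is valid in any Banach algebra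
acting on a normed space.
-/

section Definitions

open scoped Ring

variable {𝕜 A M R : Type*}

/-- `Ψ`, with derivative `Ψ'`, is a solution on `s` of the Schrödinger equation
`-Ψ″ + V Ψ = e Ψ`. The spectral parameter `e` acts through an arbitrary scalar multiplication:
`e = E : 𝕜` gives the usual equation, and `e = op Λ` the matrix equation `-U″ + V U = U Λ`. -/
structure IsSchrodingerSolution [NontriviallyNormedField 𝕜] [AddCommGroup M] [Module 𝕜 M]
    [TopologicalSpace M] [ContinuousSMul 𝕜 M] [SMul A M] [SMul R M]
    (V : 𝕜 → A) (e : R) (Ψ Ψ' : 𝕜 → M) (s : Set 𝕜) : Prop where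
  hasDerivAt : ∀ x ∈ s, HasDerivAt Ψ (Ψ' x) x
  hasDerivAt_deriv : ∀ x ∈ s, HasDerivAt Ψ' (V x • Ψ x - e • Ψ x) x

/-- The superpotential `F = U' U⁻¹` of the Darboux transformation generated by `U`, where `U'`
stands for the derivative of `U`; its value is `0` where `U` is not invertible. -/
def superpotential [MonoidWithZero A] (U U' : 𝕜 → A) (x : 𝕜) : A := U' x * (U x)⁻¹ʳ

/-- The conjugate `G = U Λ U⁻¹` of the spectral matrix `Λ` of the generating solution `U`. -/
def spectralConjugate [MonoidWithZero A] (U : 𝕜 → A) (Λ : A) (x : 𝕜) : A := U x * Λ * (U x)⁻¹ʳ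

/-- The first-order Darboux transform `Φ = Ψ' - F Ψ`, where `Ψ'` stands for the derivative
of `Ψ`. -/
def darbouxTransform [Sub M] [SMul A M] (F : 𝕜 → A) (Ψ Ψ' : 𝕜 → M) (x : 𝕜) : M :=
  Ψ' x - F x • Ψ x

end Definitions

section BanachAlgebra

open MulOpposite
open scoped Ring

variable {𝕜 A M R : Type*} [NontriviallyNormedField 𝕜]
  [NormedRing A] [NormedAlgebra 𝕜 A] [NormedAddCommGroup M] [NormedSpace 𝕜 M]
  {s : Set 𝕜} {x : 𝕜}

section Superpotential

variable [HasSummableGeomSeries A] {V U U' : 𝕜 → A} {Λ : A}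

lemma hasDerivAt_ringInverse {u' : A} (hU : HasDerivAt U u' x) (hUx : IsUnit (U x)) :
    HasDerivAt (fun t => (U t)⁻¹ʳ) (-((U x)⁻¹ʳ * u' * (U x)⁻¹ʳ)) x := by
  obtain ⟨v, hv⟩ := hUx
  have inverse_deriv := hasFDerivAt_ringInverse (𝕜 := 𝕜) v
  rw [hv] at inverse_deriv
  simpa [← hv, Function.comp_def] using inverse_deriv.comp_hasDerivAt x hU

lemma hasDerivAt_superpotential (hU : IsSchrodingerSolution V (op Λ) U U' s) (hx : x ∈ s)
    (hUx : IsUnit (U x)) :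
    HasDerivAt (superpotential U U')
      (V x - superpotential U U' x * superpotential U U' x - spectralConjugate U Λ x) x := by
  convert! (hU.hasDerivAt_deriv x hx).mul (hasDerivAt_ringInverse (hU.hasDerivAt x hx) hUx) using 1
  simp only [superpotential, spectralConjugate, op_smul_eq_mul, smul_eq_mul, sub_mul,
    Ring.mul_inverse_cancel_right _ _ hUx]
  noncomm_ring

lemma hasDerivAt_spectralConjugate (hU : HasDerivAt U (U' x) x) (hUx : IsUnit (U x)) :
    HasDerivAt (spectralConjugate U Λ)
      (superpotential U U' x * spectralConjugate U Λ x
        - spectralConjugate U Λ x * superpotential U U' x) x := by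
  have mul_spectralConjugate :
      superpotential U U' x * spectralConjugate U Λ x = U' x * Λ * (U x)⁻¹ʳ := by
    simp only [superpotential, spectralConjugate, ← mul_assoc,
      Ring.inverse_mul_cancel_right _ _ hUx]
  convert! (hU.mul_const Λ).mul (hasDerivAt_ringInverse hU hUx) using 1
  rw [mul_spectralConjugate]
  simp only [superpotential, spectralConjugate]
  noncomm_ring

end Superpotential

variable [Module A M] [IsBoundedSMul A M] [IsScalarTower 𝕜 A M]
  {V : 𝕜 → A} {Ψ Ψ' : 𝕜 → M}

lemma hasDerivAt_darbouxTransform [SMul R M] {e : R} {F : 𝕜 → A} {G : A}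
    (hF : HasDerivAt F (V x - F x * F x - G) x)
    (hΨ : IsSchrodingerSolution V e Ψ Ψ' s) (hx : x ∈ s) :
    HasDerivAt (darbouxTransform F Ψ Ψ')
      (G • Ψ x - e • Ψ x - F x • darbouxTransform F Ψ Ψ' x) x := by
  convert! (hΨ.hasDerivAt_deriv x hx).sub (hF.smul (hΨ.hasDerivAt x hx)) using 1
  simp only [darbouxTransform, sub_smul, smul_sub, mul_smul]
  abel

variable [Semiring R] [Module R M] [SMulCommClass 𝕜 R M] [SMulCommClass A R M]
  [ContinuousConstSMul R M] {e : R}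

lemma hasDerivAt_darbouxTransform_deriv {F G : 𝕜 → A}
    (hF : HasDerivAt F (V x - F x * F x - G x) x)
    (hG : HasDerivAt G (F x * G x - G x * F x) x)
    (hΨ : IsSchrodingerSolution V e Ψ Ψ' s) (hx : x ∈ s) :
    HasDerivAt (fun t => G t • Ψ t - e • Ψ t - F t • darbouxTransform F Ψ Ψ' t)
      ((V x - (2 : 𝕜) • deriv F x) • darbouxTransform F Ψ Ψ' x
        - e • darbouxTransform F Ψ Ψ' x) x := by
  have hΨx := hΨ.hasDerivAt x hx
  convert! ((hG.smul hΨx).sub (hΨx.const_smul e)).sub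
    (hF.smul (hasDerivAt_darbouxTransform hF hΨ hx)) using 1
  have deriv_eq : Ψ' x = darbouxTransform F Ψ Ψ' x + F x • Ψ x := (sub_add_cancel _ _).symm
  rw [hF.deriv, deriv_eq]
  simp only [two_smul, sub_smul, add_smul, smul_sub, smul_add, mul_smul, smul_comm (F x) e]
  abel

theorem exists_isSchrodingerSolution_darbouxTransform [HasSummableGeomSeries A]
    {U U' : 𝕜 → A} {Λ : A} (hU : IsSchrodingerSolution V (op Λ) U U' s)
    (hUinv : ∀ x ∈ s, IsUnit (U x)) (hΨ : IsSchrodingerSolution V e Ψ Ψ' s) :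
    ∃ Φ' : 𝕜 → M,
      IsSchrodingerSolution (fun x => V x - (2 : 𝕜) • deriv (superpotential U U') x) e
        (darbouxTransform (superpotential U U') Ψ Ψ') Φ' s :=
  have riccati := fun x hx => hasDerivAt_superpotential hU hx (hUinv x hx)
  have lax := fun x hx => hasDerivAt_spectralConjugate (Λ := Λ) (hU.hasDerivAt x hx) (hUinv x hx)
  ⟨_, fun x hx => hasDerivAt_darbouxTransform (riccati x hx) hΨ hx,
    fun x hx => hasDerivAt_darbouxTransform_deriv (riccati x hx) (lax x hx) hΨ hx⟩

end BanachAlgebra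

section Entrywise

open MulOpposite

lemma hasDerivAt_matrix {𝕜 m ι : Type*} [NontriviallyNormedField 𝕜] [Finite m] [Finite ι]
    {W : 𝕜 → Matrix m ι 𝕜} {W' : Matrix m ι 𝕜} {x : 𝕜} :
    HasDerivAt W W' x ↔ ∀ i j, HasDerivAt (fun t => W t i j) (W' i j) x := by
  have := Fintype.ofFinite m
  have := Fintype.ofFinite ι
  exact (hasDerivAt_pi (E' := fun _ : m => ι → 𝕜)).trans (forall_congr' fun _ => hasDerivAt_pi)

lemma matD_eq_of_hasDerivAt {W : ℝ → Matrix (Fin n) (Fin n) ℝ} {W' : Matrix (Fin n) (Fin n) ℝ}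
    {x : ℝ} (hW : HasDerivAt W W' x) : matD W x = W' :=
  Matrix.ext fun i j => (hasDerivAt_matrix.1 hW i j).deriv

lemma vecD_eq_of_hasDerivAt {ψ : ℝ → Fin n → ℝ} {ψ' : Fin n → ℝ} {x : ℝ}
    (hψ : HasDerivAt ψ ψ' x) : vecD ψ x = ψ' :=
  funext fun i => (hasDerivAt_pi.1 hψ i).deriv

lemma hasDerivAt_deriv_of_contDiffOn_two {𝕜 E : Type*} [NontriviallyNormedField 𝕜]
    [NormedAddCommGroup E] [NormedSpace 𝕜 E] {f : 𝕜 → E} {s : Set 𝕜} {x : 𝕜} (hs : IsOpen s)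
    (hf : ContDiffOn 𝕜 2 f s) (hx : x ∈ s) :
    HasDerivAt f (deriv f x) x ∧ HasDerivAt (deriv f) (deriv (deriv f) x) x :=
  ⟨((hf.contDiffAt (hs.mem_nhds hx)).differentiableAt two_ne_zero).hasDerivAt,
    (((hf.deriv_of_isOpen hs one_add_one_eq_two.le).contDiffAt
      (hs.mem_nhds hx)).differentiableAt one_ne_zero).hasDerivAt⟩

variable {s : Set ℝ} {V U : ℝ → Matrix (Fin n) (Fin n) ℝ} {Λ : Matrix (Fin n) (Fin n) ℝ}
  {E : ℝ} {Ψ : ℝ → Fin n → ℝ} {x : ℝ}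

lemma isSchrodingerSolution_matD (hs : IsOpen s)
    (hU : ∀ i j, ContDiffOn ℝ 2 (fun x => U x i j) s)
    (hUeq : ∀ x ∈ s, -matD (matD U) x + V x * U x = U x * Λ) :
    IsSchrodingerSolution V (op Λ) U (matD U) s := by
  have second_deriv : ∀ x ∈ s, matD (matD U) x = V x • U x - op Λ • U x := fun x hx => by
    rw [op_smul_eq_mul, ← hUeq x hx, smul_eq_mul]
    abel
  refine ⟨fun x hx => ?_, fun x hx => second_deriv x hx ▸ ?_⟩
  · exact hasDerivAt_matrix.2 fun i j => (hasDerivAt_deriv_of_contDiffOn_two hs (hU i j) hx).1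
  · exact hasDerivAt_matrix.2 fun i j => (hasDerivAt_deriv_of_contDiffOn_two hs (hU i j) hx).2

lemma isSchrodingerSolution_vecD (hs : IsOpen s) (hΨ : ∀ i, ContDiffOn ℝ 2 (fun x => Ψ x i) s)
    (hΨeq : ∀ x ∈ s, -vecD (vecD Ψ) x + (V x).mulVec (Ψ x) = E • Ψ x) :
    IsSchrodingerSolution V E Ψ (vecD Ψ) s := by
  have second_deriv : ∀ x ∈ s, vecD (vecD Ψ) x = V x • Ψ x - E • Ψ x := fun x hx => by
    rw [← hΨeq x hx, smul_eq_mulVec]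
    abel
  refine ⟨fun x hx => ?_, fun x hx => second_deriv x hx ▸ ?_⟩
  · exact hasDerivAt_pi.2 fun i => (hasDerivAt_deriv_of_contDiffOn_two hs (hΨ i) hx).1
  · exact hasDerivAt_pi.2 fun i => (hasDerivAt_deriv_of_contDiffOn_two hs (hΨ i) hx).2

lemma IsSchrodingerSolution.neg_vecD_vecD_add_mulVec {Φ Φ' : ℝ → Fin n → ℝ}
    (hΦ : IsSchrodingerSolution V E Φ Φ' s) (hs : IsOpen s) (hx : x ∈ s) :
    -vecD (vecD Φ) x + (V x).mulVec (Φ x) = E • Φ x := by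
  have vecD_eventuallyEq : vecD Φ =ᶠ[nhds x] Φ' := by
    filter_upwards [hs.mem_nhds hx] with t ht using vecD_eq_of_hasDerivAt (hΦ.hasDerivAt t ht)
  rw [vecD_eq_of_hasDerivAt ((hΦ.hasDerivAt_deriv x hx).congr_of_eventuallyEq vecD_eventuallyEq),
    smul_eq_mulVec]
  abel

-- Entrywise differentiation depends only on the topology of the matrix space; the operator norm
-- is chosen because it makes the matrices a Banach algebra acting boundedly on vectors.
open scoped Matrix.Norms.Operator in
lemma isBoundedSMul_mulVec {𝕜 ι : Type*} [SeminormedRing 𝕜] [Fintype ι] [DecidableEq ι] :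
    IsBoundedSMul (Matrix ι ι 𝕜) (ι → 𝕜) :=
  .of_norm_smul_le linfty_opNorm_mulVec

open scoped Matrix.Norms.Operator in
lemma exists_isSchrodingerSolution_darbouxTransform_matD {Ψ' : ℝ → Fin n → ℝ}
    {U' : ℝ → Matrix (Fin n) (Fin n) ℝ} (hU : IsSchrodingerSolution V (op Λ) U U' s)
    (hUinv : ∀ x ∈ s, IsUnit (U x)) (hΨ : IsSchrodingerSolution V E Ψ Ψ' s) :
    ∃ Φ' : ℝ → Fin n → ℝ,
      IsSchrodingerSolution (fun x => V x - (2 : ℝ) • matD (superpotential U U') x) E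
        (darbouxTransform (superpotential U U') Ψ Ψ') Φ' s := by
  have := isBoundedSMul_mulVec (𝕜 := ℝ) (ι := Fin n)
  obtain ⟨Φ', hΦ, hΦ'⟩ := exists_isSchrodingerSolution_darbouxTransform hU hUinv hΨ
  refine ⟨Φ', hΦ, fun x hx => ?_⟩
  have superpotential_differentiableAt :=
    (hasDerivAt_superpotential hU hx (hUinv x hx)).differentiableAt
  rw [matD_eq_of_hasDerivAt superpotential_differentiableAt.hasDerivAt]
  exact hΦ' x hx

theorem regular_darboux_transformation_general (hs : IsOpen s)
    (hU : ∀ i j, ContDiffOn ℝ 2 (fun x => U x i j) s) (hUinv : ∀ x ∈ s, IsUnit (U x))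
    (hUeq : ∀ x ∈ s, -matD (matD U) x + V x * U x = U x * Λ)
    {F₁ : ℝ → Matrix (Fin n) (Fin n) ℝ} (hF₁ : ∀ x, F₁ x = matD U x * (U x)⁻¹)
    {V₁ : ℝ → Matrix (Fin n) (Fin n) ℝ} (hV₁ : ∀ x, V₁ x = V x - (2 : ℝ) • matD F₁ x)
    (hΨ : ∀ i, ContDiffOn ℝ 2 (fun x => Ψ x i) s)
    (hΨeq : ∀ x ∈ s, -vecD (vecD Ψ) x + (V x).mulVec (Ψ x) = E • Ψ x)
    {Φ : ℝ → Fin n → ℝ} (hΦ : ∀ x, Φ x = vecD Ψ x - (F₁ x).mulVec (Ψ x)) :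
    ∀ x ∈ s, -vecD (vecD Φ) x + (V₁ x).mulVec (Φ x) = E • Φ x := by
  obtain rfl : F₁ = superpotential U (matD U) := funext fun x => by
    rw [hF₁ x, nonsing_inv_eq_ringInverse, superpotential]
  obtain rfl : Φ = darbouxTransform (superpotential U (matD U)) Ψ (vecD Ψ) := funext hΦ
  obtain rfl : V₁ = fun x => V x - (2 : ℝ) • matD (superpotential U (matD U)) x := funext hV₁
  obtain ⟨Φ', solΦ⟩ := exists_isSchrodingerSolution_darbouxTransform_matD
    (isSchrodingerSolution_matD hs hU hUeq) hUinv (isSchrodingerSolution_vecD hs hΨ hΨeq)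
  exact fun x hx => solΦ.neg_vecD_vecD_add_mulVec hs hx

end Entrywise

/-- First-order matrix Darboux transformation (regular case): if `-U'' + V₀U = UΛ`
with `U(x)` invertible and `-Ψ'' + V₀Ψ = EΨ`, then `Φ = Ψ' - (∂U)U⁻¹Ψ` solves
`-Φ'' + V₁Φ = EΦ` with `V₁ = V₀ - 2∂((∂U)U⁻¹)`. -/
theorem regular_darboux_transformation {n : ℕ} (a b : ℝ)
    (V0 : ℝ → Matrix (Fin n) (Fin n) ℝ)
    (hV0 : ∀ i j, ContDiffOn ℝ (⊤ : ℕ∞) (fun x => V0 x i j) (Set.Ioo a b))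
    (Λ : Matrix (Fin n) (Fin n) ℝ) (hΛ : Λ.IsDiag)
    (U : ℝ → Matrix (Fin n) (Fin n) ℝ)
    (hU : ∀ i j, ContDiffOn ℝ (⊤ : ℕ∞) (fun x => U x i j) (Set.Ioo a b))
    (hUinv : ∀ x ∈ Set.Ioo a b, IsUnit (U x))
    (hUeq : ∀ x ∈ Set.Ioo a b, -matD (matD U) x + V0 x * U x = U x * Λ)
    (F1 : ℝ → Matrix (Fin n) (Fin n) ℝ) (hF1 : ∀ x, F1 x = matD U x * (U x)⁻¹)
    (V1 : ℝ → Matrix (Fin n) (Fin n) ℝ) (hV1 : ∀ x, V1 x = V0 x - (2 : ℝ) • matD F1 x)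
    (E : ℝ) (Ψ : ℝ → Fin n → ℝ)
    (hΨ : ∀ i, ContDiffOn ℝ (⊤ : ℕ∞) (fun x => Ψ x i) (Set.Ioo a b))
    (hΨeq : ∀ x ∈ Set.Ioo a b, -vecD (vecD Ψ) x + (V0 x).mulVec (Ψ x) = E • Ψ x)
    (Φ : ℝ → Fin n → ℝ) (hΦ : ∀ x, Φ x = vecD Ψ x - (F1 x).mulVec (Ψ x)) :
    ∀ x ∈ Set.Ioo a b, -vecD (vecD Φ) x + (V1 x).mulVec (Φ x) = E • Φ x := by
  have two_le : (2 : WithTop ℕ∞) ≤ (⊤ : ℕ∞) := WithTop.coe_le_coe.2 le_top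
  exact regular_darboux_transformation_general isOpen_Ioo (fun i j => (hU i j).of_le two_le) hUinv
    hUeq hF1 hV1 (fun i => (hΨ i).of_le two_le) hΨeq hΦ

end SingularDarboux
end
end
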